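/- The image of a charming space under a continuous map is a charming space; that is, if X is a charming space, Z is a topological space, and f : X → Z is a continuous surjection, then Z is a charming space. -/

import Mathlib

open Set Function TopologicalSpace

universe u

/-- A map between topological spaces is *perfect* if it is continuous, closed, and
every fiber is compact. -/
def PerfectMap {Y : Type*} {Z : Type*} [TopologicalSpace Y] [TopologicalSpace Z]
    (f : Y → Z) : Prop :=
  Continuous f ∧ IsClosedMap f ∧ ∀ z : Z, IsCompact (f ⁻¹' {z})

/-- A topological space `X` is a *Lindelöf Σ-space* if there exist a topological space `Y`,
a continuous surjection from `Y` onto `X`, and a perfect surjection from `Y` onto some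
second-countable space. -/
def IsLindelofSigma (X : Type u) [TopologicalSpace X] : Prop :=
  ∃ (Y : Type u) (tY : TopologicalSpace Y) (Z : Type u) (tZ : TopologicalSpace Z),
    @SecondCountableTopology Z tZ ∧
    (∃ f : Y → X, @Continuous Y X tY _ f ∧ Surjective f) ∧
    (∃ g : Y → Z, @PerfectMap Y Z tY tZ g ∧ Surjective g)

/-- A topological space `X` is a *charming space* if there is a subset `Y` of `X` that is a
Lindelöf Σ-space in the subspace topology and such that for every open `U ⊇ Y`,
the set `X \ U` is a Lindelöf Σ-space in the subspace topology. -/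
def IsCharming (X : Type u) [TopologicalSpace X] : Prop :=
  ∃ Y : Set X, IsLindelofSigma Y ∧
    ∀ U : Set X, IsOpen U → Y ⊆ U → IsLindelofSigma ↥(Uᶜ)

/-- A *CL-charming* space: the shell `Y` can be chosen closed. -/
def IsCLCharming (X : Type u) [TopologicalSpace X] : Prop :=
  ∃ Y : Set X, IsClosed Y ∧ IsLindelofSigma Y ∧
    ∀ U : Set X, IsOpen U → Y ⊆ U → IsLindelofSigma ↥(Uᶜ)

/-- A *CO-charming* space: the shell `Y` can be chosen compact. -/
def IsCOCharming (X : Type u) [TopologicalSpace X] : Prop :=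
  ∃ Y : Set X, IsCompact Y ∧ IsLindelofSigma Y ∧
    ∀ U : Set X, IsOpen U → Y ⊆ U → IsLindelofSigma ↥(Uᶜ)

/-- A space has a *countable network* if there is a countable family `N` of subsets such that
every point in every open set `V` is contained in a member of `N` contained in `V`. -/
def HasCountableNetwork (X : Type u) [TopologicalSpace X] : Prop :=
  ∃ N : Set (Set X), N.Countable ∧
    ∀ x : X, ∀ V : Set X, IsOpen V → x ∈ V → ∃ n ∈ N, x ∈ n ∧ n ⊆ V

/-- A topological space `X` is *weak (4,4)-structured* if there exist a topological space `Y`,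
a continuous surjection from `Y` onto `X`, and a perfect surjection from `Y` onto some
charming space. -/
def IsWeak44Structured (X : Type u) [TopologicalSpace X] : Prop :=
  ∃ (Y : Type u) (tY : TopologicalSpace Y) (M : Type u) (tM : TopologicalSpace M),
    @IsCharming M tM ∧
    (∃ f : Y → X, @Continuous Y X tY _ f ∧ Surjective f) ∧
    (∃ g : Y → M, @PerfectMap Y M tY tM g ∧ Surjective g)

theorem IsLindelofSigma.of_surjective {X Z : Type u} [TopologicalSpace X] [TopologicalSpace Z]
    (hX : IsLindelofSigma X) {f : X → Z} (hf : Continuous f) (hsurj : Surjective f) :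
    IsLindelofSigma Z := by
  obtain ⟨Y, tY, M, tM, hM, ⟨p, hp, hpsurj⟩, hperfect⟩ := hX
  exact ⟨Y, tY, M, tM, hM, ⟨f ∘ p, hf.comp hp, hsurj.comp hpsurj⟩, hperfect⟩

theorem IsLindelofSigma.image {X Z : Type u} [TopologicalSpace X] [TopologicalSpace Z]
    {s : Set X} (hs : IsLindelofSigma s) {f : X → Z} (hf : ContinuousOn f s) :
    IsLindelofSigma (f '' s) :=
  hs.of_surjective (hf.mapsToRestrict (mapsTo_image f s)) (surjective_mapsTo_image_restrict f s)

theorem continuous_image_of_charming_general {X Z : Type u}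
    [TopologicalSpace X] [TopologicalSpace Z]
    (hX : IsCharming X) (f : X → Z) (hf : Continuous f) (hsurj : Surjective f) :
    IsCharming Z := by
  obtain ⟨Y, hY, hcompl⟩ := hX
  refine ⟨f '' Y, hY.image hf.continuousOn, fun U hU hYU ↦ ?_⟩
  have hpre : IsLindelofSigma ↥(f ⁻¹' U)ᶜ :=
    hcompl (f ⁻¹' U) (hU.preimage hf) (image_subset_iff.mp hYU)
  have himage : f '' (f ⁻¹' U)ᶜ = Uᶜ := by
    rw [← preimage_compl, image_preimage_eq _ hsurj]
  exact himage ▸ hpre.image hf.continuousOn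

/-- The image of a charming space under a continuous surjection is a charming space. -/
theorem continuous_image_of_charming {X : Type u} {Z : Type u}
    [TopologicalSpace X] [T35Space X] [TopologicalSpace Z] [T35Space Z]
    (hX : IsCharming X) (f : X → Z) (hf : Continuous f) (hsurj : Surjective f) :
    IsCharming Z := by
  exact continuous_image_of_charming_general hX f hf hsurj
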